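/- Fix T > 0. There is a constant C depending only on T such that for all R > 0, all 0 ≤ s < t ≤ T, all r ∈ [0, t) and all y ∈ ℝ², |φ_{t,R}(r,y) − φ_{s,R}(r,y)| ≤ C √(t−s) · 𝟙{‖y‖ ≤ R + t}, with the convention that φ_{s,R}(r,y) = 0 whenever r ≥ s. -/

import Mathlib

/-!
Put `a = s - r < b = t - r ≤ T`. For `‖x‖ < a` one has `G a x ≥ G b x`, while `G a x = 0` for
`‖x‖ ≥ a`. Hence pointwise `|G b - G a| ≤ (G a - G b) + 2 · G b · 𝟙{‖x‖ ≥ a}`. In polar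
coordinates, the mass of `G b` outside the ball of radius `a⁺ = max a 0` is `√(b² - a⁺²)`
(`annulus_integral`); in particular the total masses of `G a` and `G b` are `a⁺ ≤ b`. Therefore the
`L¹(ℝ²)` norm of `G b - G a` is at most `2 √(b² - a⁺²) ≤ 2 √(2T) √(t - s)`, which also bounds the
difference of the integrals over translates of `B_R`. If `‖y‖ > R + t`, both integrands vanish
identically on `B_R`.
-/

open MeasureTheory Real

noncomputable section

/-- `ℝ²` with the Euclidean norm. -/
abbrev E2 : Type := EuclideanSpace ℝ (Fin 2)

/-- The fundamental solution of the 2D wave equation (in particular `G_t ≡ 0` for `t ≤ 0`). -/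
def G (t : ℝ) (x : E2) : ℝ :=
  if ‖x‖ < t then (2 * π * Real.sqrt (t ^ 2 - ‖x‖ ^ 2))⁻¹ else 0

/-- `φ_{t,R}(r,y) = ∫_{B_R} G_{t-r}(x-y) dx`. Since `G_{t-r} ≡ 0` when `r ≥ t`, this
automatically realizes the convention `φ_{s,R}(r,y) = 0` for `r ≥ s`. -/
def phi (t R r : ℝ) (y : E2) : ℝ :=
  ∫ x in Metric.closedBall (0 : E2) R, G (t - r) (x - y)

/-- Radial profile of `G b` restricted to the annulus `a ≤ ‖x‖ < b`. -/
def annulusProfile (a b ρ : ℝ) : ℝ :=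
  if a ≤ ρ ∧ ρ < b then (2 * π * Real.sqrt (b ^ 2 - ρ ^ 2))⁻¹ else 0

/-- The improper integral `∫ₐᵇ ρ / √(b² - ρ²) dρ = √(b² - a²)`, with antiderivative
`-√(b² - ρ²)`. -/
lemma radial_integral {a b : ℝ} (ha : 0 ≤ a) (hab : a ≤ b) :
    IntegrableOn (fun ρ : ℝ => ρ / √(b ^ 2 - ρ ^ 2)) (Set.Ioc a b) ∧
      ∫ ρ in Set.Ioc a b, ρ / √(b ^ 2 - ρ ^ 2) = √(b ^ 2 - a ^ 2) := by
  have hcont : ContinuousOn (fun ρ : ℝ => -√(b ^ 2 - ρ ^ 2)) (Set.Icc a b) := by fun_prop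
  have hderiv : ∀ ρ ∈ Set.Ioo a b,
      HasDerivAt (fun ρ : ℝ => -√(b ^ 2 - ρ ^ 2)) (ρ / √(b ^ 2 - ρ ^ 2)) ρ := by
    intro ρ hρ
    have hpos : 0 < b ^ 2 - ρ ^ 2 := by nlinarith [hρ.1, hρ.2]
    have h1 : HasDerivAt (fun ρ : ℝ => b ^ 2 - ρ ^ 2) (-(2 * ρ)) ρ := by
      simpa using (hasDerivAt_pow 2 ρ).const_sub (b ^ 2)
    have h2 := (h1.sqrt hpos.ne').neg
    rwa [neg_div, neg_neg, mul_div_mul_left _ _ two_ne_zero] at h2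
  have hnn : ∀ ρ ∈ Set.Ioo a b, 0 ≤ ρ / √(b ^ 2 - ρ ^ 2) := fun ρ hρ =>
    div_nonneg (ha.trans hρ.1.le) (Real.sqrt_nonneg _)
  have hint := intervalIntegral.integrableOn_deriv_of_nonneg hcont hderiv hnn
  refine ⟨hint, ?_⟩
  rw [← intervalIntegral.integral_of_le hab,
    intervalIntegral.integral_eq_sub_of_hasDerivAt_of_le hab hcont hderiv
      ((intervalIntegrable_iff_integrableOn_Ioc_of_le hab).2 hint)]
  simp

/-- The mass of `G b` on the annulus `a ≤ ‖x‖ < b`. -/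
lemma annulus_integral {a b : ℝ} (ha : 0 ≤ a) (hab : a ≤ b) :
    Integrable (fun x : E2 => annulusProfile a b ‖x‖) ∧
      ∫ x : E2, annulusProfile a b ‖x‖ = √(b ^ 2 - a ^ 2) := by
  obtain ⟨hint, hval⟩ := radial_integral ha hab
  -- the endpoint `ρ = a` is null, and `√0 = 0` makes the quotient vanish at `ρ = b`
  have hae : (fun ρ : ℝ => ρ ^ (Module.finrank ℝ E2 - 1) • annulusProfile a b ρ) =ᵐ[volume]
      (Set.Ioc a b).indicator (fun ρ => (2 * π)⁻¹ * (ρ / √(b ^ 2 - ρ ^ 2))) := by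
    have hne : ∀ᵐ ρ : ℝ, ρ ≠ a := by simp [ae_iff]
    filter_upwards [hne] with ρ hρ
    simp only [finrank_euclideanSpace, Fintype.card_fin, annulusProfile, Set.indicator,
      Set.mem_Ioc, smul_eq_mul]
    rcases lt_trichotomy ρ b with h | h | h
    · rcases lt_or_gt_of_ne hρ with h' | h'
      · rw [if_neg (by intro hh; linarith [hh.1]), if_neg (by intro hh; linarith [hh.1]), mul_zero]
      · rw [if_pos ⟨h'.le, h⟩, if_pos ⟨h', h.le⟩]
        simp only [mul_inv, div_eq_mul_inv]
        ring
    · subst h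
      simp
    · rw [if_neg (by intro hh; linarith [hh.2]), if_neg (by intro hh; linarith [hh.2]), mul_zero]
  have hind : Integrable
      ((Set.Ioc a b).indicator (fun ρ => (2 * π)⁻¹ * (ρ / √(b ^ 2 - ρ ^ 2)))) :=
    (integrable_indicator_iff measurableSet_Ioc).2 (hint.const_mul _)
  constructor
  · rw [integrable_fun_norm_addHaar volume (f := annulusProfile a b)]
    exact (hind.congr hae.symm).integrableOn
  · rw [integral_fun_norm_addHaar volume (annulusProfile a b),
      integral_congr_ae (ae_restrict_of_ae hae),
      setIntegral_indicator measurableSet_Ioc,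
      Set.inter_eq_right.2 (show Set.Ioc a b ⊆ Set.Ioi 0 from fun ρ hρ => ha.trans_lt hρ.1),
      integral_const_mul, hval]
    simp only [finrank_euclideanSpace, Fintype.card_fin, Measure.real,
      EuclideanSpace.volume_ball_fin_two]
    simp
    have := Real.pi_pos.ne'
    field_simp
    rw [ENNReal.toReal_ofReal Real.pi_pos.le]

lemma G_eq_profile (b : ℝ) : G b = fun x => annulusProfile 0 (max b 0) ‖x‖ := by
  funext x
  unfold G annulusProfile
  rcases le_total b 0 with h | h
  · rw [max_eq_right h, if_neg (by linarith [norm_nonneg x]),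
      if_neg (by intro hh; linarith [norm_nonneg x, hh.2])]
  · simp [max_eq_left h]

lemma integrable_G (b : ℝ) : Integrable (G b) := by
  rw [G_eq_profile]
  exact (annulus_integral le_rfl (le_max_right _ _)).1

lemma integral_G (b : ℝ) : ∫ x, G b x = max b 0 := by
  rw [G_eq_profile, (annulus_integral le_rfl (le_max_right _ _)).2]
  simp

lemma abs_G_sub_le {a b : ℝ} (hab : a ≤ b) (x : E2) :
    |G b x - G a x| ≤ G a x - G b x + 2 * annulusProfile (max a 0) b ‖x‖ := by
  have hx := norm_nonneg x
  unfold G annulusProfile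
  by_cases h : ‖x‖ < a
  · have hpos : 0 < a ^ 2 - ‖x‖ ^ 2 := by nlinarith
    have hle : a ^ 2 - ‖x‖ ^ 2 ≤ b ^ 2 - ‖x‖ ^ 2 := by nlinarith
    have hs := Real.sqrt_pos.2 hpos
    have hinv : (2 * π * √(b ^ 2 - ‖x‖ ^ 2))⁻¹ ≤ (2 * π * √(a ^ 2 - ‖x‖ ^ 2))⁻¹ := by
      have := Real.pi_pos
      gcongr
    have hnot : ¬ (max a 0 ≤ ‖x‖ ∧ ‖x‖ < b) := fun hh => by
      linarith [le_max_left a 0, hh.1]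
    rw [if_pos h, if_pos (h.trans_le hab), if_neg hnot, abs_sub_comm,
      abs_of_nonneg (sub_nonneg.2 hinv)]
    simp
  · have hm : max a 0 ≤ ‖x‖ := max_le (not_lt.1 h) hx
    rw [if_neg h]
    by_cases h2 : ‖x‖ < b
    · rw [if_pos h2, if_pos ⟨hm, h2⟩, sub_zero, abs_of_nonneg (by positivity)]
      linarith
    · simp [h2]

/-- The `L¹(ℝ²)` modulus of continuity of `b ↦ G b`. -/
lemma integral_abs_G_sub_le {a b : ℝ} (hab : a ≤ b) (hb : 0 ≤ b) :
    ∫ x, |G b x - G a x| ≤ 2 * √(b ^ 2 - (max a 0) ^ 2) := by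
  obtain ⟨hi, hv⟩ := annulus_integral (le_max_right a 0) (max_le hab hb)
  have hsub : Integrable (fun x => G a x - G b x) := (integrable_G a).sub (integrable_G b)
  calc ∫ x, |G b x - G a x|
      ≤ ∫ x, ((G a x - G b x) + 2 * annulusProfile (max a 0) b ‖x‖) :=
        integral_mono ((integrable_G b).sub (integrable_G a)).abs (hsub.add (hi.const_mul 2))
          (abs_G_sub_le hab)
    _ = (max a 0 - max b 0) + 2 * √(b ^ 2 - (max a 0) ^ 2) := by
        rw [integral_add hsub (hi.const_mul 2), integral_sub (integrable_G a) (integrable_G b),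
          integral_G, integral_G, integral_const_mul, hv]
    _ ≤ _ := by linarith [max_le_max_right 0 hab]

lemma phi_eq_zero {t R r : ℝ} {y : E2} (hr : 0 ≤ r) (hy : R + t < ‖y‖) : phi t R r y = 0 := by
  unfold phi
  refine setIntegral_eq_zero_of_forall_eq_zero fun x hx => ?_
  have hxR : ‖x‖ ≤ R := by simpa using hx
  have := norm_sub_norm_le y x
  rw [norm_sub_rev] at this
  exact if_neg (by linarith)

/-- For `T > 0` there is a constant `C` depending only on `T` such that for all `R > 0`,
`0 ≤ s < t ≤ T`, `r ∈ [0,t)` and `y ∈ ℝ²`,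
`|φ_{t,R}(r,y) - φ_{s,R}(r,y)| ≤ C √(t-s) 𝟙{‖y‖ ≤ R+t}`. -/
theorem stmt_19 (T : ℝ) (hT : 0 < T) :
    ∃ C : ℝ, ∀ (R s t r : ℝ) (y : E2), 0 < R → 0 ≤ s → s < t → t ≤ T → 0 ≤ r → r < t →
      |phi t R r y - phi s R r y| ≤
        C * Real.sqrt (t - s) * (if ‖y‖ ≤ R + t then 1 else 0) := by
  refine ⟨2 * √(2 * T), fun R s t r y _ _ hst htT hr hrt => ?_⟩
  by_cases hy : ‖y‖ ≤ R + t
  · rw [if_pos hy, mul_one]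
    have hit := (integrable_G (t - r)).comp_sub_right y
    have his := (integrable_G (s - r)).comp_sub_right y
    have hsq : (t - r) ^ 2 - (max (s - r) 0) ^ 2 ≤ 2 * T * (t - s) := by
      rcases le_total (s - r) 0 with h | h
      · rw [max_eq_right h]
        nlinarith
      · rw [max_eq_left h]
        nlinarith
    calc |phi t R r y - phi s R r y|
        = |∫ x in Metric.closedBall (0 : E2) R, (G (t - r) (x - y) - G (s - r) (x - y))| := by
          rw [integral_sub hit.integrableOn his.integrableOn, phi, phi]
      _ ≤ ∫ x in Metric.closedBall (0 : E2) R, |G (t - r) (x - y) - G (s - r) (x - y)| :=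
          abs_integral_le_integral_abs
      _ ≤ ∫ x, |G (t - r) (x - y) - G (s - r) (x - y)| :=
          setIntegral_le_integral (hit.sub his).abs (ae_of_all _ fun x => abs_nonneg _)
      _ = ∫ x, |G (t - r) x - G (s - r) x| :=
          integral_sub_right_eq_self (fun x => |G (t - r) x - G (s - r) x|) y
      _ ≤ 2 * √((t - r) ^ 2 - (max (s - r) 0) ^ 2) :=
          integral_abs_G_sub_le (by linarith) (by linarith)
      _ ≤ 2 * √(2 * T * (t - s)) := by gcongr
      _ = 2 * √(2 * T) * √(t - s) := by rw [Real.sqrt_mul (by positivity)]; ring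
  · rw [phi_eq_zero hr (not_le.1 hy), phi_eq_zero hr (by linarith [not_le.1 hy]), if_neg hy]
    simp
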